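/- Fix an integer d ≥ 3 and a real p with 1/(d-1) < p < 1. For every b > 0 there exist δ, c, R > 0 such that: if 𝒢 is a regular (b,d)-expander on n vertices with girth exceeding R, then with probability at least 1 − exp(−c n), the random graph G ∼ 𝒢_p contains a simple path with at least δn edges. -/

import Mathlib

open scoped Classical symmDiff

noncomputable section

namespace Percolation

variable {V : Type} [Fintype V] [DecidableEq V]

/-- The edge set of `G` as a finset. -/
noncomputable def edgeFinset' (G : SimpleGraph V) : Finset (Sym2 V) :=
  Finset.univ.filter (· ∈ G.edgeSet)

/-- Probability that bond percolation on `G` with parameter `p` produces a spanning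
subgraph satisfying `P`. -/
noncomputable def percProb (G : SimpleGraph V) (p : ℝ) (P : SimpleGraph V → Prop) : ℝ :=
  ∑ s ∈ (edgeFinset' G).powerset,
    (p ^ s.card * (1 - p) ^ ((edgeFinset' G).card - s.card)) *
      (if P (SimpleGraph.fromEdgeSet (↑s)) then 1 else 0)

/-- Joint probability for two independent bond percolations on `G`. -/
noncomputable def percProb2 (G : SimpleGraph V) (p₁ p₂ : ℝ)
    (P : SimpleGraph V → SimpleGraph V → Prop) : ℝ :=
  ∑ s ∈ (edgeFinset' G).powerset, ∑ t ∈ (edgeFinset' G).powerset,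
    (p₁ ^ s.card * (1 - p₁) ^ ((edgeFinset' G).card - s.card)) *
    (p₂ ^ t.card * (1 - p₂) ^ ((edgeFinset' G).card - t.card)) *
      (if P (SimpleGraph.fromEdgeSet (↑s)) (SimpleGraph.fromEdgeSet (↑t)) then 1 else 0)

/-- Number of edges of `G` joining `S` to its complement. -/
noncomputable def cutCard (G : SimpleGraph V) (S : Finset V) : ℕ :=
  ((edgeFinset' G).filter (fun e => ∃ x ∈ S, ∃ y, y ∉ S ∧ e = s(x, y))).card

/-- `G` is a `(b,d)`-expander: max degree at most `d`, and every vertex set of size at most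
`n/2` has at least `b|S|` edges to its complement. -/
def IsExpander (G : SimpleGraph V) (b : ℝ) (d : ℕ) : Prop :=
  (∀ v, (G.neighborSet v).ncard ≤ d) ∧
  ∀ S : Finset V, (S.card : ℝ) ≤ Fintype.card V / 2 → b * S.card ≤ cutCard G S

/-- `G` is a regular `(b,d)`-expander. -/
def IsRegularExpander (G : SimpleGraph V) (b : ℝ) (d : ℕ) : Prop :=
  IsExpander G b d ∧ ∀ v, (G.neighborSet v).ncard = d

/-- The vertices of the connected component `c` of `G`. -/
noncomputable def compVerts (G : SimpleGraph V) (c : G.ConnectedComponent) : Finset V :=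
  Finset.univ.filter (fun v => G.connectedComponentMk v = c)

/-- The edges of the connected component `c` of `G`. -/
noncomputable def compEdges (G : SimpleGraph V) (c : G.ConnectedComponent) : Finset (Sym2 V) :=
  (edgeFinset' G).filter (fun e => ∀ v ∈ e, G.connectedComponentMk v = c)

/-- `c` is a largest connected component of `G`. -/
def IsLargestComp (G : SimpleGraph V) (c : G.ConnectedComponent) : Prop :=
  ∀ c' : G.ConnectedComponent, (compVerts G c').card ≤ (compVerts G c).card

/-- The 2-core of the connected component `c` of `G` : the maximal subgraph of `G`
supported inside `c` all of whose vertices have degree at least 2. -/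
noncomputable def twoCoreComp (G : SimpleGraph V) (c : G.ConnectedComponent) : SimpleGraph V :=
  sSup {H : SimpleGraph V | H ≤ G ∧ (∀ v ∈ H.support, G.connectedComponentMk v = c) ∧
    ∀ v ∈ H.support, 2 ≤ (H.neighborSet v).ncard}

/-- The event `A^R_{x,y}(H)`: the connected component of `y` in `H` with the edge `xy`
removed (if present) has at least `R` vertices. -/
def eventA (H : SimpleGraph V) (R : ℕ) (x y : V) : Prop :=
  R ≤ (compVerts (H.deleteEdges {s(x, y)})
        ((H.deleteEdges {s(x, y)}).connectedComponentMk y)).card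

/-- `E₁(H)`: edges `xy` of `H` such that `A^R_{x,y}` or `A^R_{y,x}` holds. -/
noncomputable def E1set (H : SimpleGraph V) (R : ℕ) : Finset (Sym2 V) :=
  (edgeFinset' H).filter (fun e => ∃ x y, e = s(x, y) ∧ (eventA H R x y ∨ eventA H R y x))

/-- `V₁(H)`: vertices `x` such that for some `y`, `xy ∈ E(H)` and `A^R_{x,y}` holds. -/
noncomputable def V1set (H : SimpleGraph V) (R : ℕ) : Finset V :=
  Finset.univ.filter (fun x => ∃ y, H.Adj x y ∧ eventA H R x y)

/-- `E₂(H)`: edges `xy` of `H` such that both `A^R_{x,y}` and `A^R_{y,x}` hold. -/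
noncomputable def E2set (H : SimpleGraph V) (R : ℕ) : Finset (Sym2 V) :=
  (edgeFinset' H).filter (fun e => ∃ x y, e = s(x, y) ∧ eventA H R x y ∧ eventA H R y x)

/-- `V₂(H)`: vertices incident to an edge of `E₂(H)`. -/
noncomputable def V2set (H : SimpleGraph V) (R : ℕ) : Finset V :=
  Finset.univ.filter (fun x => ∃ e ∈ E2set H R, x ∈ e)

/-- `V̄₁(H)`: vertices `y` such that `A^R_{x,y}(H)` holds for some `x`. -/
noncomputable def Vbar1 (H : SimpleGraph V) (R : ℕ) : Finset V :=
  Finset.univ.filter (fun y => ∃ x, eventA H R x y)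

/-- `S` is `k`-thick in `H`: a union of pairwise disjoint subsets, each of size at least
`k`, each inducing a connected subgraph of `H`. -/
def IsThick (H : SimpleGraph V) (k : ℕ) (S : Finset V) : Prop :=
  ∃ P : Finset (Finset V),
    (∀ T ∈ P, k ≤ T.card ∧ (H.induce (↑T : Set V)).Connected) ∧
    (↑P : Set (Finset V)).PairwiseDisjoint id ∧ S = P.biUnion id

/-- `S` is a separator of `K`. -/
def IsSeparator {W : Type} [Fintype W] (K : SimpleGraph W) (S : Finset W) : Prop :=
  ∃ A B : Finset W, Disjoint A B ∧ Disjoint A S ∧ Disjoint B S ∧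
    (∀ w, w ∈ A ∨ w ∈ B ∨ w ∈ S) ∧
    (∀ a ∈ A, ∀ b ∈ B, ¬ K.Adj a b) ∧
    3 * A.card ≤ 2 * Fintype.card W ∧ 3 * B.card ≤ 2 * Fintype.card W

set_option linter.unusedSectionVars false

/-! ### Expectation over a random subset -/

/-- Expectation of `f` at the random subset of `E` that keeps each element independently with
probability `p`. -/
def subsetExp {α : Type} (E : Finset α) (p : ℝ) (f : Finset α → ℝ) : ℝ :=
  ∑ s ∈ E.powerset, (p ^ s.card * (1 - p) ^ (E.card - s.card)) * f s

section SubsetExp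

variable {α : Type} [DecidableEq α] {p : ℝ}

lemma subsetExp_empty (f : Finset α → ℝ) : subsetExp ∅ p f = f ∅ := by
  simp [subsetExp]

lemma subsetExp_insert {e : α} {E : Finset α} (he : e ∉ E) (f : Finset α → ℝ) :
    subsetExp (insert e E) p f =
      p * subsetExp E p (fun s => f (insert e s)) + (1 - p) * subsetExp E p f := by
  unfold subsetExp
  rw [Finset.sum_powerset_insert he, add_comm, Finset.mul_sum, Finset.mul_sum]
  congr 1
  · refine Finset.sum_congr rfl fun t ht => ?_
    have het : e ∉ t := fun h => he (Finset.mem_powerset.1 ht h)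
    rw [Finset.card_insert_of_notMem het, Finset.card_insert_of_notMem he, Nat.add_sub_add_right]
    ring
  · refine Finset.sum_congr rfl fun t ht => ?_
    have hc := Finset.card_le_card (Finset.mem_powerset.1 ht)
    rw [Finset.card_insert_of_notMem he, Nat.sub_add_comm hc]
    ring

lemma subsetExp_mono (hp0 : 0 ≤ p) (hp1 : p ≤ 1) {E : Finset α} {f g : Finset α → ℝ}
    (h : ∀ s ⊆ E, f s ≤ g s) : subsetExp E p f ≤ subsetExp E p g := by
  have hq : 0 ≤ 1 - p := by linarith
  refine Finset.sum_le_sum fun s hs => ?_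
  exact mul_le_mul_of_nonneg_left (h s (Finset.mem_powerset.1 hs)) (by positivity)

lemma subsetExp_add (E : Finset α) (f g : Finset α → ℝ) :
    subsetExp E p (fun s => f s + g s) = subsetExp E p f + subsetExp E p g := by
  simp [subsetExp, mul_add, Finset.sum_add_distrib]

lemma subsetExp_const_mul (E : Finset α) (c : ℝ) (f : Finset α → ℝ) :
    subsetExp E p (fun s => c * f s) = c * subsetExp E p f := by
  simp only [subsetExp, Finset.mul_sum]
  exact Finset.sum_congr rfl fun s _ => by ring

lemma subsetExp_sum {ι : Type*} (I : Finset ι) (E : Finset α) (f : ι → Finset α → ℝ) :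
    subsetExp E p (fun s => ∑ i ∈ I, f i s) = ∑ i ∈ I, subsetExp E p (f i) := by
  simp only [subsetExp, Finset.mul_sum]
  exact Finset.sum_comm

lemma subsetExp_const (E : Finset α) (c : ℝ) : subsetExp E p (fun _ => c) = c := by
  induction E using Finset.induction_on with
  | empty => simp [subsetExp_empty]
  | insert e E he ih => rw [subsetExp_insert he, ih]; ring

/-- A random subset of a disjoint union is a pair of independent random subsets. -/
lemma subsetExp_union {A B : Finset α} (h : Disjoint A B) (f : Finset α → ℝ) :
    subsetExp (A ∪ B) p f =
      subsetExp A p (fun s => subsetExp B p (fun t => f (s ∪ t))) := by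
  induction A using Finset.induction_on generalizing f with
  | empty => simp [subsetExp_empty]
  | insert e A he ih =>
    rw [Finset.disjoint_insert_left] at h
    rw [Finset.insert_union, subsetExp_insert (by simp [he, h.1]), subsetExp_insert he,
      ih h.2, ih h.2]
    simp only [Finset.insert_union]

/-- The union of two independent random subsets is a random subset. -/
lemma subsetExp_sprinkle (E : Finset α) {p₁ p₂ : ℝ} (h : 1 - p = (1 - p₁) * (1 - p₂))
    (f : Finset α → ℝ) :
    subsetExp E p f = subsetExp E p₁ (fun s => subsetExp E p₂ (fun t => f (s ∪ t))) := by
  induction E using Finset.induction_on generalizing f with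
  | empty => simp [subsetExp_empty]
  | insert e E he ih =>
    simp only [subsetExp_insert he, Finset.insert_union, Finset.union_insert, Finset.insert_idem,
      subsetExp_add, subsetExp_const_mul]
    rw [ih f, ih (fun s => f (insert e s)), h]
    obtain rfl : p = 1 - (1 - p₁) * (1 - p₂) := by linarith
    ring

lemma two_point_exp_le (hp0 : 0 ≤ p) (hp1 : p ≤ 1) {a b r : ℝ} (hab : |a - b| ≤ r)
    (hr : r ≤ 1) :
    p * Real.exp a + (1 - p) * Real.exp b ≤ Real.exp (p * a + (1 - p) * b + r ^ 2) := by
  set m := p * a + (1 - p) * b with hm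
  have key : ∀ x : ℝ, |x - m| ≤ r →
      Real.exp x ≤ Real.exp m * (1 + (x - m) + r ^ 2) := by
    intro x hx
    have h1 := Real.abs_exp_sub_one_sub_id_le (hx.trans hr)
    have h2 : (x - m) ^ 2 ≤ r ^ 2 := sq_le_sq' (by linarith [abs_le.1 hx]) (abs_le.1 hx).2
    have h3 : Real.exp x = Real.exp m * Real.exp (x - m) := by rw [← Real.exp_add]; ring_nf
    rw [h3]
    exact mul_le_mul_of_nonneg_left (by linarith [(abs_le.1 h1).2]) (Real.exp_pos _).le
  have hr0 : 0 ≤ r := (abs_nonneg _).trans hab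
  have ha : |a - m| ≤ r := by
    have : a - m = (1 - p) * (a - b) := by rw [hm]; ring
    rw [this, abs_mul, abs_of_nonneg (by linarith : (0 : ℝ) ≤ 1 - p)]
    nlinarith [abs_nonneg (a - b)]
  have hb : |b - m| ≤ r := by
    have : b - m = -(p * (a - b)) := by rw [hm]; ring
    rw [this, abs_neg, abs_mul, abs_of_nonneg hp0]
    nlinarith [abs_nonneg (a - b)]
  calc p * Real.exp a + (1 - p) * Real.exp b
      ≤ p * (Real.exp m * (1 + (a - m) + r ^ 2))
        + (1 - p) * (Real.exp m * (1 + (b - m) + r ^ 2)) :=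
        add_le_add (mul_le_mul_of_nonneg_left (key a ha) hp0)
          (mul_le_mul_of_nonneg_left (key b hb) (by linarith))
    _ = Real.exp m * (r ^ 2 + 1) := by
        rw [show p * (Real.exp m * (1 + (a - m) + r ^ 2))
          + (1 - p) * (Real.exp m * (1 + (b - m) + r ^ 2))
          = Real.exp m * (1 + r ^ 2 + (p * a + (1 - p) * b - m)) by ring, ← hm]
        ring
    _ ≤ Real.exp m * Real.exp (r ^ 2) :=
        mul_le_mul_of_nonneg_left (Real.add_one_le_exp _) (Real.exp_pos _).le
    _ = Real.exp (m + r ^ 2) := (Real.exp_add _ _).symm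

/-- Exponential moment bound under bounded differences. -/
lemma subsetExp_exp_le (hp0 : 0 ≤ p) (hp1 : p ≤ 1) {c τ : ℝ} (hτ : |τ| * c ≤ 1)
    (E : Finset α) (f : Finset α → ℝ)
    (hf : ∀ e ∈ E, ∀ s ⊆ E, |f (insert e s) - f s| ≤ c) :
    subsetExp E p (fun s => Real.exp (τ * f s)) ≤
      Real.exp (τ * subsetExp E p f + E.card * (|τ| * c) ^ 2) := by
  induction E using Finset.induction_on generalizing f with
  | empty => simp [subsetExp_empty]
  | insert e E he ih =>
    have hE : E ⊆ insert e E := Finset.subset_insert _ _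
    have h1 := ih (fun s => f (insert e s)) (fun e' he' s hs => by
      have := hf e' (hE he') (insert e s) (Finset.insert_subset_insert e hs)
      rwa [Finset.insert_comm] at this)
    have h0 := ih f (fun e' he' s hs => hf e' (hE he') s (hs.trans hE))
    set μ₁ := subsetExp E p (fun s => f (insert e s))
    set μ₀ := subsetExp E p f
    have hμ : |μ₁ - μ₀| ≤ c := by
      have hd : ∀ s ⊆ E, |f (insert e s) - f s| ≤ c := fun s hs =>
        hf e (Finset.mem_insert_self _ _) s (hs.trans hE)
      rw [abs_le]
      constructor
      · have : μ₀ ≤ subsetExp E p (fun s => f (insert e s) + c) :=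
          subsetExp_mono hp0 hp1 fun s hs => by linarith [(abs_le.1 (hd s hs)).1]
        rw [subsetExp_add, subsetExp_const] at this
        linarith
      · have : μ₁ ≤ subsetExp E p (fun s => f s + c) :=
          subsetExp_mono hp0 hp1 fun s hs => by linarith [(abs_le.1 (hd s hs)).2]
        rw [subsetExp_add, subsetExp_const] at this
        linarith
    have hab : |τ * μ₁ - τ * μ₀| ≤ |τ| * c := by
      rw [← mul_sub, abs_mul]
      exact mul_le_mul_of_nonneg_left hμ (abs_nonneg _)
    rw [subsetExp_insert he, subsetExp_insert he, Finset.card_insert_of_notMem he]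
    calc p * subsetExp E p (fun s => Real.exp (τ * f (insert e s)))
          + (1 - p) * subsetExp E p (fun s => Real.exp (τ * f s))
        ≤ p * Real.exp (τ * μ₁ + E.card * (|τ| * c) ^ 2)
          + (1 - p) * Real.exp (τ * μ₀ + E.card * (|τ| * c) ^ 2) :=
          add_le_add (mul_le_mul_of_nonneg_left h1 hp0)
            (mul_le_mul_of_nonneg_left h0 (by linarith))
      _ = (p * Real.exp (τ * μ₁) + (1 - p) * Real.exp (τ * μ₀))
          * Real.exp (E.card * (|τ| * c) ^ 2) := by
          rw [Real.exp_add, Real.exp_add]; ring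
      _ ≤ Real.exp (p * (τ * μ₁) + (1 - p) * (τ * μ₀) + (|τ| * c) ^ 2)
          * Real.exp (E.card * (|τ| * c) ^ 2) :=
          mul_le_mul_of_nonneg_right (two_point_exp_le hp0 hp1 hab hτ) (Real.exp_pos _).le
      _ = _ := by
          rw [← Real.exp_add, Nat.cast_succ]
          congr 1
          ring

/-- Lower tail bound under bounded differences. -/
lemma subsetExp_lower_tail (hp0 : 0 ≤ p) (hp1 : p ≤ 1) {c τ μ a : ℝ} (hτ0 : 0 ≤ τ)
    (hτ : τ * c ≤ 1) (E : Finset α) (f : Finset α → ℝ)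
    (hf : ∀ e ∈ E, ∀ s ⊆ E, |f (insert e s) - f s| ≤ c) (hμ : μ ≤ subsetExp E p f) :
    subsetExp E p (fun s => if f s < a then 1 else 0) ≤
      Real.exp (τ * (a - μ) + E.card * (τ * c) ^ 2) := by
  have h := subsetExp_exp_le hp0 hp1 (τ := -τ) (by rwa [abs_neg, abs_of_nonneg hτ0]) E f hf
  rw [abs_neg, abs_of_nonneg hτ0] at h
  calc subsetExp E p (fun s => if f s < a then 1 else 0)
      ≤ subsetExp E p (fun s => Real.exp (τ * a) * Real.exp (-τ * f s)) := by
        refine subsetExp_mono hp0 hp1 fun s _ => ?_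
        rw [← Real.exp_add]
        split_ifs with hs
        · exact Real.one_le_exp (by nlinarith)
        · exact (Real.exp_pos _).le
    _ ≤ Real.exp (τ * a) * Real.exp (-τ * subsetExp E p f + E.card * (τ * c) ^ 2) := by
        rw [subsetExp_const_mul]
        exact mul_le_mul_of_nonneg_left h (Real.exp_pos _).le
    _ ≤ _ := by
        rw [← Real.exp_add]
        exact Real.exp_le_exp.2 (by nlinarith)

lemma subsetExp_eq_self (E : Finset α) :
    subsetExp E p (fun s => if s = E then 1 else 0) = p ^ E.card := by
  simp [subsetExp]

/-- If small good sets survive the deletion of any `m * ℓ` elements, then a random subset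
contains a good set with overwhelming probability. -/
lemma subsetExp_no_good_le (hp0 : 0 ≤ p) (hp1 : p ≤ 1) (good : Finset α → Prop) (ℓ : ℕ) (m : ℕ)
    (E : Finset α)
    (h : ∀ D : Finset α, D.card ≤ m * ℓ → ∃ Q ⊆ E \ D, Q.card ≤ ℓ ∧ good Q) :
    subsetExp E p (fun s => if ∀ Q ⊆ s, ¬ good Q then 1 else 0) ≤ (1 - p ^ ℓ) ^ m := by
  have hpl : 0 ≤ 1 - p ^ ℓ := by linarith [pow_le_one₀ hp0 hp1 (n := ℓ)]
  induction m generalizing E with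
  | zero =>
    calc _ ≤ subsetExp E p (fun _ => 1) :=
          subsetExp_mono hp0 hp1 fun s _ => by split_ifs <;> norm_num
      _ = _ := by simp [subsetExp_const]
  | succ m ih =>
    obtain ⟨Q, hQE, hQl, hQ⟩ := h ∅ (by simp)
    rw [Finset.sdiff_empty] at hQE
    have ih' := ih (E \ Q) fun D hD => by
      obtain ⟨Q', h1, h2, h3⟩ := h (Q ∪ D) (by
        have := Finset.card_union_le Q D
        nlinarith)
      exact ⟨Q', by rwa [sdiff_sdiff_left], h2, h3⟩
    rw [← Finset.union_sdiff_of_subset hQE, subsetExp_union Finset.disjoint_sdiff]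
    calc _ ≤ subsetExp Q p (fun s => (1 - p ^ ℓ) ^ m * (1 + (-1) * if s = Q then 1 else 0)) := by
          refine subsetExp_mono hp0 hp1 fun s hs => ?_
          split_ifs with hsQ
          · have : ∀ t, ¬ ∀ Q' ⊆ s ∪ t, ¬ good Q' := fun t ht =>
              ht Q (hsQ ▸ Finset.subset_union_left) hQ
            simp [this, subsetExp_const]
          · rw [mul_zero, add_zero, mul_one]
            refine le_trans (subsetExp_mono hp0 hp1 fun t ht => ?_) ih'
            split_ifs with h1 h2 h2
            · exact le_rfl
            · exact absurd (fun Q' hQ' => h1 Q' (hQ'.trans Finset.subset_union_right)) h2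
            · exact zero_le_one
            · exact le_rfl
      _ = (1 - p ^ ℓ) ^ m * (1 - p ^ Q.card) := by
          rw [subsetExp_const_mul, subsetExp_add, subsetExp_const_mul, subsetExp_const,
            subsetExp_eq_self]
          ring
      _ ≤ (1 - p ^ ℓ) ^ m * (1 - p ^ ℓ) := by
          refine mul_le_mul_of_nonneg_left ?_ (by positivity)
          linarith [pow_le_pow_of_le_one hp0 hp1 hQl]
      _ = _ := (pow_succ _ _).symm

end SubsetExp

/-! ### Depth-first search -/

/-- Either `H` has a path with at least `L` edges, or at most `L` vertices separate `H` into two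
parts containing equally many vertices of `W`. -/
lemma exists_long_path_or_balanced_cut (H : SimpleGraph V) (W : Finset V) (L : ℕ) :
    (∃ (u w : V) (P : H.Walk u w), P.IsPath ∧ L ≤ P.length) ∨
    ∃ S U : Finset V, Disjoint S U ∧ U.card ≤ L ∧
      (∀ x ∈ S, ∀ y, y ∉ S → y ∉ U → ¬ H.Adj x y) ∧
      2 * (S ∩ W).card + (U ∩ W).card = W.card := by
  by_contra! hcon
  obtain ⟨hpath, hcut⟩ := hcon
  have hlen : ∀ l : List V, l.Nodup → l.IsChain H.Adj → l.toFinset.card ≤ L := by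
    intro l hl hc
    rw [List.toFinset_card_of_nodup hl]
    by_cases hne : l = []
    · simp [hne]
    · have hs := SimpleGraph.Walk.support_ofSupport hne hc
      have := hpath _ _ (SimpleGraph.Walk.ofSupport l hne hc)
        (SimpleGraph.Walk.IsPath.mk' (by rwa [hs]))
      have h2 := SimpleGraph.Walk.length_support (SimpleGraph.Walk.ofSupport l hne hc)
      rw [hs] at h2
      omega
  have key : ∀ k : ℕ, ∃ (S : Finset V) (l : List V), l.Nodup ∧ l.IsChain H.Adj ∧
      Disjoint S l.toFinset ∧ (∀ x ∈ S, ∀ y, y ∉ S → y ∉ l.toFinset → ¬ H.Adj x y) ∧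
      2 * (S ∩ W).card + (l.toFinset ∩ W).card ≤ W.card ∧ k ≤ 2 * S.card + l.toFinset.card := by
    intro k
    induction k with
    | zero => exact ⟨∅, [], by simp⟩
    | succ k ih =>
      obtain ⟨S, l, hnd, hch, hdisj, hadj, hW, hk⟩ := ih
      have hlt : 2 * (S ∩ W).card + (l.toFinset ∩ W).card < W.card :=
        lt_of_le_of_ne hW (hcut S l.toFinset hdisj (hlen l hnd hch) hadj)
      have push : ∀ t, t ∉ S → t ∉ l.toFinset → (t :: l).IsChain H.Adj →
          ∃ (S : Finset V) (l : List V), l.Nodup ∧ l.IsChain H.Adj ∧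
          Disjoint S l.toFinset ∧ (∀ x ∈ S, ∀ y, y ∉ S → y ∉ l.toFinset → ¬ H.Adj x y) ∧
          2 * (S ∩ W).card + (l.toFinset ∩ W).card ≤ W.card ∧
          k + 1 ≤ 2 * S.card + l.toFinset.card := by
        intro t htS htl hc
        refine ⟨S, t :: l, List.nodup_cons.2 ⟨by simpa using htl, hnd⟩, hc, ?_, ?_, ?_, ?_⟩
        · rw [List.toFinset_cons, Finset.disjoint_insert_right]
          exact ⟨htS, hdisj⟩
        · intro x hx y hyS hyl
          rw [List.toFinset_cons, Finset.mem_insert, not_or] at hyl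
          exact hadj x hx y hyS hyl.2
        · rw [List.toFinset_cons]
          have : (insert t l.toFinset ∩ W).card ≤ (l.toFinset ∩ W).card + 1 := by
            refine (Finset.card_le_card (t := insert t (l.toFinset ∩ W)) ?_).trans
              (Finset.card_insert_le _ _)
            intro z
            simp only [Finset.mem_inter, Finset.mem_insert]
            tauto
          omega
        · rw [List.toFinset_cons, Finset.card_insert_of_notMem htl]
          omega
      cases l with
      | nil =>
        obtain ⟨t, ht⟩ : ∃ t, t ∉ S := by
          by_contra! hall
          have : S ∩ W = W := by ext z; simp [hall z]
          rw [this] at hlt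
          omega
        exact push t ht (by simp) (by simp)
      | cons a l =>
        by_cases hex : ∃ t, t ∉ S ∧ t ∉ (a :: l).toFinset ∧ H.Adj a t
        · obtain ⟨t, h1, h2, h3⟩ := hex
          exact push t h1 h2 (List.isChain_cons_cons.2 ⟨h3.symm, hch⟩)
        · push Not at hex
          have hal : a ∉ l.toFinset := by simpa using (List.nodup_cons.1 hnd).1
          rw [List.toFinset_cons] at hdisj hadj hlt hk hex
          rw [Finset.disjoint_insert_right] at hdisj
          refine ⟨insert a S, l, (List.nodup_cons.1 hnd).2, hch.of_cons, ?_, ?_, ?_, ?_⟩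
          · rw [Finset.disjoint_insert_left]
            exact ⟨hal, hdisj.2⟩
          · intro x hx y hyS hyl
            rw [Finset.mem_insert, not_or] at hyS
            have hy : y ∉ insert a l.toFinset := by simp only [Finset.mem_insert]; tauto
            rcases Finset.mem_insert.1 hx with rfl | hx
            · exact hex y hyS.2 hy
            · exact hadj x hx y hyS.2 hy
          · by_cases haW : a ∈ W
            · rw [Finset.insert_inter_of_mem haW, Finset.card_insert_of_notMem
                (by simp [hal])] at hlt
              rw [Finset.insert_inter_of_mem haW, Finset.card_insert_of_notMem
                (by simp [hdisj.1])]
              omega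
            · rw [Finset.insert_inter_of_notMem haW] at hlt ⊢
              omega
          · rw [Finset.card_insert_of_notMem hal] at hk
            rw [Finset.card_insert_of_notMem hdisj.1]
            omega
  obtain ⟨S, l, -, -, -, -, -, hk⟩ := key (3 * Fintype.card V + 1)
  have h1 := Finset.card_le_univ S
  have h2 := Finset.card_le_univ l.toFinset
  omega

/-! ### Exploring a cluster -/

/-- The vertices joined to `v` by edges of `s`. -/
def cluster (s : Finset (Sym2 V)) (v : V) : Finset V :=
  Finset.univ.filter fun w => (SimpleGraph.fromEdgeSet (s : Set (Sym2 V))).Reachable v w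

lemma mem_cluster {s : Finset (Sym2 V)} {v w : V} :
    w ∈ cluster s v ↔ (SimpleGraph.fromEdgeSet (s : Set (Sym2 V))).Reachable v w := by
  simp [cluster]

lemma mem_edgeFinset' {G : SimpleGraph V} {e : Sym2 V} : e ∈ edgeFinset' G ↔ e ∈ G.edgeSet := by
  simp [edgeFinset']

/-- The neighbours of `v`. -/
def nbrs (G : SimpleGraph V) (v : V) : Finset V := Finset.univ.filter (G.Adj v)

lemma mem_nbrs {G : SimpleGraph V} {v w : V} : w ∈ nbrs G v ↔ G.Adj v w := by simp [nbrs]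

lemma card_nbrs (G : SimpleGraph V) (v : V) : (nbrs G v).card = (G.neighborSet v).ncard := by
  rw [← Set.ncard_coe_finset]
  congr 1
  ext w
  simp [nbrs]

/-- In a graph of large girth, a vertex outside a small connected set has at most one neighbour
in that set. -/
lemma eq_of_adj_of_small_connected {G : SimpleGraph V} {C : Finset V}
    (hgirth : ∀ a (w : G.Walk a a), w.IsCycle → C.card + 1 < w.length) {v : V}
    (hC : ∀ x ∈ C, ∃ w : G.Walk v x, ∀ z ∈ w.support, z ∈ C)
    {x x' y : V} (hx : x ∈ C) (hx' : x' ∈ C) (hy : y ∉ C) (h : G.Adj x y) (h' : G.Adj x' y) :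
    x = x' := by
  by_contra hne
  obtain ⟨w, hw⟩ := hC x hx
  obtain ⟨w', hw'⟩ := hC x' hx'
  set P := (w.reverse.append w').bypass with hP
  have hPp : P.IsPath := SimpleGraph.Walk.bypass_isPath _
  have hPs : ∀ z ∈ P.support, z ∈ C := by
    intro z hz
    have := SimpleGraph.Walk.support_bypass_subset_support _ hz
    rw [SimpleGraph.Walk.mem_support_append_iff, SimpleGraph.Walk.support_reverse,
      List.mem_reverse] at this
    exact this.elim (hw z) (hw' z)
  have hlen : P.length + 1 ≤ C.card := by
    rw [← SimpleGraph.Walk.length_support, ← List.toFinset_card_of_nodup hPp.support_nodup]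
    exact Finset.card_le_card fun z hz => hPs z (List.mem_toFinset.1 hz)
  have hyP : y ∉ P.support := fun hyP => hy (hPs y hyP)
  have hcyc : (SimpleGraph.Walk.cons h' (SimpleGraph.Walk.cons h.symm P)).IsCycle := by
    rw [SimpleGraph.Walk.cons_isCycle_iff]
    refine ⟨hPp.cons hyP, ?_⟩
    rw [SimpleGraph.Walk.edges_cons, List.mem_cons, not_or]
    refine ⟨?_, fun hmem => hyP (SimpleGraph.Walk.snd_mem_support_of_mem_edges _ hmem)⟩
    rw [Sym2.eq_swap, Sym2.congr_right]
    exact fun hh => hne hh.symm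
  have := hgirth _ _ hcyc
  simp only [SimpleGraph.Walk.length_cons] at this
  omega

/-- Exploring the cluster of `v` edge by edge: `C` is the part of the cluster found so far using
the open edges `O`, while `F` are edges leaving `C` that are still unexplored. -/
lemma subsetExp_explore_le {G : SimpleGraph V} {d K : ℕ} {p x : ℝ} (hp0 : 0 ≤ p) (hp1 : p ≤ 1)
    (hx0 : 0 ≤ x) (hx : p * x ^ (d - 1) + (1 - p) ≤ x)
    (hreg : ∀ v, (nbrs G v).card = d)
    (hgirth : ∀ a (w : G.Walk a a), w.IsCycle → K < w.length) (v : V)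
    (E O F : Finset (Sym2 V)) (C : Finset V) (hO : ∀ e ∈ O, e ∈ G.edgeSet)
    (hC : ∀ y ∈ C, ∃ w : (SimpleGraph.fromEdgeSet (O : Set (Sym2 V))).Walk v y,
      ∀ z ∈ w.support, z ∈ C)
    (hFE : F ⊆ E) (hF : ∀ e ∈ F, ∃ y ∈ C, ∃ z, z ∉ C ∧ G.Adj y z ∧ e = s(y, z))
    (hE : ∀ y z, G.Adj y z → y ∉ C → z ∉ C → s(y, z) ∈ E) :
    subsetExp E p (fun s => if (cluster (O ∪ s) v).card < K then 1 else 0) ≤ x ^ F.card := by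
  induction E using Finset.strongInduction generalizing O F C with
  | H E ih =>
  have hle : ∀ (A O : Finset (Sym2 V)),
      subsetExp A p (fun s => if (cluster (O ∪ s) v).card < K then 1 else 0) ≤ 1 := by
    intro A O
    refine (subsetExp_mono hp0 hp1 (g := fun _ => 1) fun s _ => ?_).trans_eq (subsetExp_const _ _)
    split_ifs <;> norm_num
  rcases F.eq_empty_or_nonempty with rfl | ⟨e, he⟩
  · simpa using hle E O
  by_cases hCK : K ≤ C.card
  · refine (subsetExp_mono hp0 hp1 (g := fun _ => 0) fun s _ => ?_).trans ?_
    · rw [if_neg]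
      rw [not_lt]
      refine hCK.trans (Finset.card_le_card fun y hy => ?_)
      obtain ⟨w, -⟩ := hC y hy
      rw [mem_cluster]
      exact w.reachable.mono (SimpleGraph.fromEdgeSet_mono (by simp))
    · rw [subsetExp_const]
      positivity
  · rw [not_le] at hCK
    have hOG : SimpleGraph.fromEdgeSet (O : Set (Sym2 V)) ≤ G := by
      intro a b hab
      exact hO _ (SimpleGraph.fromEdgeSet_adj _ |>.1 hab).1
    have huniq : ∀ {a a' y : V}, a ∈ C → a' ∈ C → y ∉ C → G.Adj a y → G.Adj a' y → a = a' := by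
      refine eq_of_adj_of_small_connected (v := v) (fun a w hw => ?_) (fun y hy => ?_)
      · have := hgirth a w hw
        omega
      · obtain ⟨w, hw⟩ := hC y hy
        exact ⟨w.mapLe hOG, by simpa using hw⟩
    obtain ⟨a, ha, y, hy, hay, rfl⟩ := hF e he
    have hEE : E.erase s(a, y) ⊂ E := Finset.erase_ssubset (hFE he)
    rw [← Finset.insert_erase (hFE he), subsetExp_insert (Finset.notMem_erase _ _)]
    have hne : ∀ {u w : V}, u ∉ C → w ∉ C → s(u, w) ≠ s(a, y) := by
      intro u w hu hw h
      rcases Sym2.eq_iff.1 h with ⟨rfl, -⟩ | ⟨-, rfl⟩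
      · exact hu ha
      · exact hw ha
    have hclosed := ih _ hEE O (F.erase s(a, y)) C hO hC (Finset.erase_subset_erase _ hFE)
      (fun e' he' => hF e' (Finset.mem_of_mem_erase he'))
      (fun u w huw hu hw => Finset.mem_erase.2 ⟨hne hu hw, hE u w huw hu hw⟩)
    set N := ((nbrs G y).erase a).image (fun z => s(y, z)) with hN
    have hNout : ∀ z, G.Adj y z → z ≠ a → z ∉ C := fun z hz hza hzC =>
      hza (huniq hzC ha hy hz.symm hay)
    have hNdisj : Disjoint (F.erase s(a, y)) N := by
      rw [Finset.disjoint_left]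
      intro e' he' heN
      obtain ⟨b, hb, z, hz, hbz, rfl⟩ := hF e' (Finset.mem_of_mem_erase he')
      obtain ⟨t, ht, hte⟩ := Finset.mem_image.1 heN
      rw [Finset.mem_erase, mem_nbrs] at ht
      have := hNout t ht.2 ht.1
      rcases Sym2.eq_iff.1 hte with ⟨rfl, -⟩ | ⟨-, rfl⟩
      · exact hy hb
      · exact this hb
    have hNcard : N.card = d - 1 := by
      rw [hN, Finset.card_image_of_injective _ (fun z z' h => Sym2.congr_right.1 h),
        Finset.card_erase_of_mem (mem_nbrs.2 hay.symm), hreg]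
    have hopen := ih _ hEE (insert s(a, y) O) (F.erase s(a, y) ∪ N) (insert y C)
      (fun e' he' => by
        rcases Finset.mem_insert.1 he' with rfl | he'
        · exact hay
        · exact hO e' he')
      (fun z hz => by
        have hmono : SimpleGraph.fromEdgeSet (O : Set (Sym2 V)) ≤
            SimpleGraph.fromEdgeSet ((insert s(a, y) O : Finset (Sym2 V)) : Set (Sym2 V)) :=
          SimpleGraph.fromEdgeSet_mono (by simp)
        rcases Finset.mem_insert.1 hz with rfl | hz
        · obtain ⟨w, hw⟩ := hC a ha
          refine ⟨(w.mapLe hmono).concat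
            ((SimpleGraph.fromEdgeSet_adj _).2 ⟨by simp, hay.ne⟩), fun t ht => ?_⟩
          rw [SimpleGraph.Walk.support_concat, List.mem_append] at ht
          rcases ht with ht | ht
          · exact Finset.mem_insert_of_mem (hw t (by simpa using ht))
          · simp_all
        · obtain ⟨w, hw⟩ := hC z hz
          exact ⟨w.mapLe hmono, fun t ht => Finset.mem_insert_of_mem (hw t (by simpa using ht))⟩)
      (by
        intro e' he'
        rcases Finset.mem_union.1 he' with he' | he'
        · exact Finset.erase_subset_erase _ hFE he'
        · obtain ⟨t, ht, rfl⟩ := Finset.mem_image.1 he'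
          rw [Finset.mem_erase, mem_nbrs] at ht
          have := hNout t ht.2 ht.1
          exact Finset.mem_erase.2 ⟨hne hy this, hE y t ht.2 hy this⟩)
      (by
        intro e' he'
        rcases Finset.mem_union.1 he' with he' | he'
        · obtain ⟨hne', heF⟩ := Finset.mem_erase.1 he'
          obtain ⟨b, hb, z, hz, hbz, rfl⟩ := hF e' heF
          refine ⟨b, Finset.mem_insert_of_mem hb, z, ?_, hbz, rfl⟩
          rw [Finset.mem_insert, not_or]
          refine ⟨?_, hz⟩
          rintro rfl
          exact hne' (by rw [huniq hb ha hy hbz hay])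
        · obtain ⟨t, ht, rfl⟩ := Finset.mem_image.1 he'
          rw [Finset.mem_erase, mem_nbrs] at ht
          refine ⟨y, Finset.mem_insert_self _ _, t, ?_, ht.2, rfl⟩
          rw [Finset.mem_insert, not_or]
          exact ⟨ht.2.ne', hNout t ht.2 ht.1⟩)
      (fun u w huw hu hw => by
        rw [Finset.mem_insert, not_or] at hu hw
        exact Finset.mem_erase.2 ⟨hne hu.2 hw.2, hE u w huw hu.2 hw.2⟩)
    rw [Finset.card_union_of_disjoint hNdisj, hNcard] at hopen
    have hFc : F.card = (F.erase s(a, y)).card + 1 := (Finset.card_erase_add_one he).symm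
    simp only [Finset.insert_union] at hopen
    simp only [Finset.union_insert]
    calc _ ≤ p * x ^ ((F.erase s(a, y)).card + (d - 1))
          + (1 - p) * x ^ (F.erase s(a, y)).card :=
          add_le_add (mul_le_mul_of_nonneg_left hopen hp0)
            (mul_le_mul_of_nonneg_left hclosed (by linarith))
      _ = x ^ (F.erase s(a, y)).card * (p * x ^ (d - 1) + (1 - p)) := by rw [pow_add]; ring
      _ ≤ x ^ (F.erase s(a, y)).card * x := mul_le_mul_of_nonneg_left hx (by positivity)
      _ = x ^ F.card := by rw [hFc, pow_succ]

/-- In a regular graph of large girth, a supercritical percolation cluster is small with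
probability bounded away from one. -/
lemma subsetExp_small_cluster_le {G : SimpleGraph V} {d K : ℕ} {p x : ℝ} (hp0 : 0 ≤ p)
    (hp1 : p ≤ 1) (hx0 : 0 ≤ x) (hx1 : x ≤ 1) (hd : 1 ≤ d)
    (hx : p * x ^ (d - 1) + (1 - p) ≤ x)
    (hreg : ∀ v, (nbrs G v).card = d)
    (hgirth : ∀ a (w : G.Walk a a), w.IsCycle → K < w.length) (v : V) :
    subsetExp (edgeFinset' G) p (fun s => if (cluster s v).card < K then 1 else 0) ≤ x := by
  have h := subsetExp_explore_le hp0 hp1 hx0 hx hreg hgirth v (edgeFinset' G) ∅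
    ((nbrs G v).image fun z => s(v, z)) {v} (by simp)
    (fun y hy => by
      obtain rfl := Finset.mem_singleton.1 hy
      exact ⟨.nil, by simp⟩)
    (fun e he => by
      obtain ⟨z, hz, rfl⟩ := Finset.mem_image.1 he
      exact mem_edgeFinset'.2 (mem_nbrs.1 hz))
    (fun e he => by
      obtain ⟨z, hz, rfl⟩ := Finset.mem_image.1 he
      exact ⟨v, by simp, z, by simpa using (mem_nbrs.1 hz).ne', mem_nbrs.1 hz, rfl⟩)
    (fun y z hyz _ _ => mem_edgeFinset'.2 hyz)
  simp only [Finset.empty_union] at h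
  refine h.trans ?_
  rw [Finset.card_image_of_injective _ (fun z z' h => Sym2.congr_right.1 h), hreg]
  exact pow_le_of_le_one hx0 hx1 (by omega)

/-! ### Clusters -/

lemma mem_cluster_self (s : Finset (Sym2 V)) (v : V) : v ∈ cluster s v :=
  mem_cluster.2 (SimpleGraph.Reachable.refl _)

lemma cluster_eq_of_mem {s : Finset (Sym2 V)} {v w : V} (h : w ∈ cluster s v) :
    cluster s w = cluster s v := by
  ext z
  rw [mem_cluster] at h
  rw [mem_cluster, mem_cluster]
  exact ⟨fun hz => h.trans hz, fun hz => h.symm.trans hz⟩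

lemma cluster_mono {s s' : Finset (Sym2 V)} (h : s ⊆ s') (v : V) : cluster s v ⊆ cluster s' v :=
  fun w hw => mem_cluster.2 ((mem_cluster.1 hw).mono
    (SimpleGraph.fromEdgeSet_mono (by exact_mod_cast h)))

/-- The vertices whose cluster has at least `K` vertices. -/
def bigVerts (s : Finset (Sym2 V)) (K : ℕ) : Finset V :=
  Finset.univ.filter fun v => K ≤ (cluster s v).card

lemma mem_bigVerts {s : Finset (Sym2 V)} {K : ℕ} {v : V} :
    v ∈ bigVerts s K ↔ K ≤ (cluster s v).card := by simp [bigVerts]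

lemma bigVerts_mono {s s' : Finset (Sym2 V)} (h : s ⊆ s') (K : ℕ) :
    bigVerts s K ⊆ bigVerts s' K := fun v hv =>
  mem_bigVerts.2 ((mem_bigVerts.1 hv).trans (Finset.card_le_card (cluster_mono h v)))

/-- Adding edges with endpoints in `X` puts at most `|X| * K` new vertices into big clusters. -/
lemma card_bigVerts_sdiff_le {s s' : Finset (Sym2 V)} {X : Finset V} (K : ℕ)
    (hX : ∀ x z, s(x, z) ∈ s' → s(x, z) ∉ s → x ∈ X) :
    (bigVerts s' K \ bigVerts s K).card ≤ X.card * K := by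
  refine (Finset.card_le_card (t := X.biUnion fun x =>
    if (cluster s x).card < K then cluster s x else ∅) fun v hv => ?_).trans
    (Finset.card_biUnion_le_card_mul _ _ _ fun x _ => ?_)
  · rw [Finset.mem_sdiff, mem_bigVerts, mem_bigVerts, not_le] at hv
    obtain ⟨hbig, hsmall⟩ := hv
    obtain ⟨w, hw', hw⟩ : ∃ w ∈ cluster s' v, w ∉ cluster s v := by
      by_contra! hall
      exact absurd (Finset.card_le_card hall) (by omega)
    obtain ⟨P⟩ := mem_cluster.1 hw'
    obtain ⟨e, -, h1, h2⟩ := P.exists_boundary_dart (cluster s v : Set V)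
      (by simpa using mem_cluster_self s v) (by simpa using hw)
    rw [Finset.mem_coe] at h1 h2
    have hadj := (SimpleGraph.fromEdgeSet_adj _).1 e.adj
    have hnot : s(e.fst, e.snd) ∉ s := by
      intro hmem
      refine h2 (mem_cluster.2 ((mem_cluster.1 h1).trans (SimpleGraph.Adj.reachable ?_)))
      exact (SimpleGraph.fromEdgeSet_adj _).2 ⟨by simpa using hmem, hadj.2⟩
    have hc := cluster_eq_of_mem h1
    rw [Finset.mem_biUnion]
    refine ⟨e.fst, hX _ _ (by simpa using hadj.1) hnot, ?_⟩
    rw [hc, if_pos hsmall]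
    exact mem_cluster_self s v
  · split_ifs with h
    · exact h.le
    · simp

lemma abs_card_bigVerts_insert_sub_le (e : Sym2 V) (s : Finset (Sym2 V)) (K : ℕ) :
    |((bigVerts (insert e s) K).card : ℝ) - (bigVerts s K).card| ≤ 2 * K := by
  induction e using Sym2.ind with
  | _ x y =>
  have hsub : s ⊆ insert s(x, y) s := Finset.subset_insert _ _
  have h := card_bigVerts_sdiff_le (X := {x, y}) K (s := s) (s' := insert s(x, y) s)
    (fun a c h1 h2 => by
    rcases Finset.mem_insert.1 h1 with h1 | h1
    · rcases Sym2.eq_iff.1 h1 with ⟨rfl, -⟩ | ⟨rfl, -⟩ <;> simp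
    · exact absurd h1 h2)
  have hmono := Finset.card_le_card (bigVerts_mono hsub K)
  have h2 : ({x, y} : Finset V).card ≤ 2 := Finset.card_le_two
  have h3 := Finset.card_sdiff_add_card_eq_card (bigVerts_mono hsub K)
  have h4 : (bigVerts (insert s(x, y) s) K).card ≤ (bigVerts s K).card + 2 * K := by
    nlinarith
  have h5 : ((bigVerts (insert s(x, y) s) K).card : ℝ) ≤ (bigVerts s K).card + 2 * K := by
    exact_mod_cast h4
  have h6 : ((bigVerts s K).card : ℝ) ≤ (bigVerts (insert s(x, y) s) K).card := by
    exact_mod_cast hmono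
  rw [abs_le]
  constructor <;> linarith [(Nat.cast_nonneg K : (0 : ℝ) ≤ K)]

/-- The clusters with at least `K` vertices. -/
def bigClusters (s : Finset (Sym2 V)) (K : ℕ) : Finset (Finset V) :=
  (bigVerts s K).image (cluster s)

lemma card_bigClusters_mul_le (s : Finset (Sym2 V)) (K : ℕ) :
    (bigClusters s K).card * K ≤ Fintype.card V := by
  have hdisj : ∀ c ∈ bigClusters s K, ∀ c' ∈ bigClusters s K, c ≠ c' → Disjoint c c' := by
    intro c hc c' hc' hne
    obtain ⟨v, -, rfl⟩ := Finset.mem_image.1 hc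
    obtain ⟨v', -, rfl⟩ := Finset.mem_image.1 hc'
    rw [Finset.disjoint_left]
    intro z hz hz'
    exact hne ((cluster_eq_of_mem hz).symm.trans (cluster_eq_of_mem hz'))
  calc (bigClusters s K).card * K ≤ ∑ c ∈ bigClusters s K, c.card := by
        rw [← smul_eq_mul]
        refine Finset.card_nsmul_le_sum _ _ _ fun c hc => ?_
        obtain ⟨v, hv, rfl⟩ := Finset.mem_image.1 hc
        exact mem_bigVerts.1 hv
    _ = ((bigClusters s K).biUnion id).card := (Finset.card_biUnion hdisj).symm
    _ ≤ Fintype.card V := Finset.card_le_univ _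

/-- The edges of `s` not touching `U`. -/
def avoiding (s : Finset (Sym2 V)) (U : Finset V) : Finset (Sym2 V) :=
  s.filter fun e => ∀ u ∈ U, u ∉ e

/-- `Q` avoids `U` and joins a vertex of `A` to a vertex of `B`. -/
def Connects (A B U : Finset V) (Q : Finset (Sym2 V)) : Prop :=
  (∀ e ∈ Q, ∀ u ∈ U, u ∉ e) ∧ ∃ a ∈ A, ∃ b ∈ B, b ∈ cluster Q a

/-- In the absence of long paths, the big clusters can be split into two large groups which are
not connected off a small vertex set. -/
lemma exists_unconnected_split {G : SimpleGraph V} {d K L : ℕ}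
    (hreg : ∀ v, (nbrs G v).card = d) {s t : Finset (Sym2 V)} (hs : s ⊆ edgeFinset' G)
    (hpath : ¬ ∃ (u w : V) (P : (SimpleGraph.fromEdgeSet (↑(s ∪ t) : Set (Sym2 V))).Walk u w),
      P.IsPath ∧ L ≤ P.length) :
    ∃ U : Finset V, U.card ≤ L ∧ ∃ 𝒜 ⊆ bigClusters (avoiding s U) K,
      (bigVerts s K).card ≤
        2 * (𝒜.biUnion id).card + (L + 2 * ((d + 1) * L * K)) ∧
      (bigVerts s K).card ≤
        2 * ((bigClusters (avoiding s U) K \ 𝒜).biUnion id).card + (L + 2 * ((d + 1) * L * K)) ∧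
      ∀ Q ⊆ t, ¬ Connects (𝒜.biUnion id) ((bigClusters (avoiding s U) K \ 𝒜).biUnion id) U Q := by
  obtain ⟨S, U, hSU, hUL, hadj, hW⟩ :=
    (exists_long_path_or_balanced_cut _ (bigVerts s K) L).resolve_left hpath
  have hclosed : ∀ Q ⊆ s ∪ t, (∀ e ∈ Q, ∀ u ∈ U, u ∉ e) → ∀ v ∈ S, cluster Q v ⊆ S := by
    intro Q hQ hQU v hv w hw
    by_contra hwS
    obtain ⟨P⟩ := mem_cluster.1 hw
    obtain ⟨e, -, h1, h2⟩ := P.exists_boundary_dart (S : Set V) hv hwS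
    have he := (SimpleGraph.fromEdgeSet_adj _).1 e.adj
    have heQ : s(e.fst, e.snd) ∈ Q := by simpa using he.1
    refine hadj e.fst h1 e.snd h2 (fun hU => hQU _ heQ _ hU (by simp))
      ((SimpleGraph.fromEdgeSet_adj _).2 ⟨Finset.mem_coe.2 (hQ heQ), he.2⟩)
  set s' := avoiding s U with hs'
  have hs's : s' ⊆ s := Finset.filter_subset _ _
  have hs'U : ∀ e ∈ s', ∀ u ∈ U, u ∉ e := fun e he => (Finset.mem_filter.1 he).2
  have hbad : (bigVerts s K \ bigVerts s' K).card ≤ (d + 1) * L * K := by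
    refine (card_bigVerts_sdiff_le (X := U ∪ U.biUnion (nbrs G)) K ?_).trans ?_
    · intro x z h1 h2
      by_contra hx
      rw [Finset.mem_union, not_or, Finset.mem_biUnion] at hx
      refine h2 (Finset.mem_filter.2 ⟨h1, fun u hu hmem => ?_⟩)
      rcases Sym2.mem_iff.1 hmem with rfl | rfl
      · exact hx.1 hu
      · exact hx.2 ⟨u, hu, mem_nbrs.2 (mem_edgeFinset'.1 (hs h1)).symm⟩
    · have h1 := Finset.card_union_le U (U.biUnion (nbrs G))
      have h2 := Finset.card_biUnion_le_card_mul U (nbrs G) d fun v _ => (hreg v).le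
      have h3 : (U ∪ U.biUnion (nbrs G)).card ≤ (d + 1) * L := by nlinarith
      exact Nat.mul_le_mul_right _ h3
  set 𝒜 := (bigClusters s' K).filter (· ⊆ S) with h𝒜
  have hmem : ∀ v ∈ bigVerts s' K, cluster s' v ∈ bigClusters s' K := fun v hv =>
    Finset.mem_image_of_mem _ hv
  have hUW : (U ∩ bigVerts s K).card ≤ L :=
    (Finset.card_le_card Finset.inter_subset_left).trans hUL
  have hA : S ∩ bigVerts s K ⊆ 𝒜.biUnion id ∪ (bigVerts s K \ bigVerts s' K) := by
    intro v hv
    rw [Finset.mem_inter] at hv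
    by_cases hv' : v ∈ bigVerts s' K
    · refine Finset.mem_union_left _ (Finset.mem_biUnion.2 ⟨cluster s' v, ?_,
        mem_cluster_self _ _⟩)
      exact Finset.mem_filter.2 ⟨hmem v hv',
        hclosed s' (hs's.trans Finset.subset_union_left) hs'U v hv.1⟩
    · exact Finset.mem_union_right _ (Finset.mem_sdiff.2 ⟨hv.2, hv'⟩)
  have hB : bigVerts s K ⊆ (S ∩ bigVerts s K) ∪ (U ∩ bigVerts s K) ∪
      ((bigClusters s' K \ 𝒜).biUnion id ∪ (bigVerts s K \ bigVerts s' K)) := by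
    intro v hv
    by_cases hvS : v ∈ S
    · simp [hvS, hv]
    by_cases hvU : v ∈ U
    · simp [hvU, hv]
    refine Finset.mem_union_right _ ?_
    by_cases hv' : v ∈ bigVerts s' K
    · refine Finset.mem_union_left _ (Finset.mem_biUnion.2 ⟨cluster s' v, ?_,
        mem_cluster_self _ _⟩)
      exact Finset.mem_sdiff.2 ⟨hmem v hv', fun h =>
        hvS ((Finset.mem_filter.1 h).2 (mem_cluster_self _ _))⟩
    · exact Finset.mem_union_right _ (Finset.mem_sdiff.2 ⟨hv, hv'⟩)
  have hA' := (Finset.card_le_card hA).trans (Finset.card_union_le _ _)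
  have hB' := (Finset.card_le_card hB).trans (Finset.card_union_le _ _)
  have hB1 := Finset.card_union_le (S ∩ bigVerts s K) (U ∩ bigVerts s K)
  have hB2 := Finset.card_union_le ((bigClusters s' K \ 𝒜).biUnion id)
    (bigVerts s K \ bigVerts s' K)
  have hBbig : (bigVerts s K).card ≤
      2 * ((bigClusters s' K \ 𝒜).biUnion id).card + (L + 2 * ((d + 1) * L * K)) := by omega
  refine ⟨U, hUL, 𝒜, Finset.filter_subset _ _, by omega, hBbig, ?_⟩
  rintro Q hQ ⟨hQU, a, ha, b, hb, hab⟩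
  obtain ⟨c, hc, hac⟩ := Finset.mem_biUnion.1 ha
  obtain ⟨c', hc', hbc⟩ := Finset.mem_biUnion.1 hb
  have haS : a ∈ S := (Finset.mem_filter.1 hc).2 hac
  have hbS : b ∈ S := hclosed Q (hQ.trans Finset.subset_union_right) hQU a haS hab
  obtain ⟨hc'1, hc'2⟩ := Finset.mem_sdiff.1 hc'
  obtain ⟨v, -, rfl⟩ := Finset.mem_image.1 hc'1
  refine hc'2 (Finset.mem_filter.2 ⟨hc'1, ?_⟩)
  rw [← cluster_eq_of_mem hbc]
  exact hclosed s' (hs's.trans Finset.subset_union_left) hs'U b hbS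

/-! ### Short connections in expanders -/

/-- The vertices at distance at most `i` from `A` in `G`. -/
def ballAround (G : SimpleGraph V) (A : Finset V) (i : ℕ) : Finset V :=
  Finset.univ.filter fun v => ∃ a ∈ A, ∃ w : G.Walk a v, w.length ≤ i

lemma mem_ballAround {G : SimpleGraph V} {A : Finset V} {i : ℕ} {v : V} :
    v ∈ ballAround G A i ↔ ∃ a ∈ A, ∃ w : G.Walk a v, w.length ≤ i := by simp [ballAround]

lemma ballAround_growth {G : SimpleGraph V} {b : ℝ} {d : ℕ} (hG : IsExpander G b d)
    (hb : 0 < b) (hd : 0 < d) {A : Finset V} {β : ℝ} (hA : β ≤ A.card) {D : Finset (Sym2 V)}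
    (hD : (D.card : ℝ) ≤ b * β / 2) (i : ℕ) :
    (Fintype.card V : ℝ) < 2 *
        (ballAround (SimpleGraph.fromEdgeSet (↑(edgeFinset' G \ D) : Set (Sym2 V))) A i).card ∨
      i * (b * β / (2 * d)) ≤
        (ballAround (SimpleGraph.fromEdgeSet (↑(edgeFinset' G \ D) : Set (Sym2 V))) A i).card := by
  set G' := SimpleGraph.fromEdgeSet (↑(edgeFinset' G \ D) : Set (Sym2 V)) with hG'
  have hmono : ∀ i, ballAround G' A i ⊆ ballAround G' A (i + 1) := by
    intro i v hv
    obtain ⟨a, ha, w, hw⟩ := mem_ballAround.1 hv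
    exact mem_ballAround.2 ⟨a, ha, w, by omega⟩
  induction i with
  | zero => right; simp
  | succ i ih =>
    set X := ballAround G' A i with hX
    set Y := ballAround G' A (i + 1) with hY
    have hXY : (X.card : ℝ) ≤ Y.card := by exact_mod_cast Finset.card_le_card (hmono i)
    by_cases hbig : (Fintype.card V : ℝ) < 2 * X.card
    · left; linarith
    right
    replace ih := ih.resolve_left hbig
    have hcut := hG.2 X (by linarith)
    have hAX : (A.card : ℝ) ≤ X.card := by
      have : A ⊆ X := fun a ha => mem_ballAround.2 ⟨a, ha, .nil, by simp⟩
      exact_mod_cast Finset.card_le_card this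
    have hsub : (edgeFinset' G).filter (fun e => ∃ x ∈ X, ∃ y, y ∉ X ∧ e = s(x, y)) ⊆
        D ∪ (Y \ X).biUnion fun y => (nbrs G y).image fun x => s(x, y) := by
      intro e he
      obtain ⟨heG, x, hx, y, hy, rfl⟩ := Finset.mem_filter.1 he
      by_cases heD : s(x, y) ∈ D
      · exact Finset.mem_union_left _ heD
      refine Finset.mem_union_right _ (Finset.mem_biUnion.2 ⟨y, Finset.mem_sdiff.2 ⟨?_, hy⟩, ?_⟩)
      · obtain ⟨a, ha, w, hw⟩ := mem_ballAround.1 hx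
        have hxy : G'.Adj x y := (SimpleGraph.fromEdgeSet_adj _).2
          ⟨Finset.mem_coe.2 (Finset.mem_sdiff.2 ⟨heG, heD⟩), by rintro rfl; exact hy hx⟩
        exact mem_ballAround.2 ⟨a, ha, w.concat hxy, by
          rw [SimpleGraph.Walk.length_concat]; omega⟩
      · exact Finset.mem_image.2 ⟨x, mem_nbrs.2 (mem_edgeFinset'.1 heG).symm, rfl⟩
    have hcard : cutCard G X ≤ D.card + (Y \ X).card * d := by
      refine (Finset.card_le_card hsub).trans ((Finset.card_union_le _ _).trans ?_)
      refine Nat.add_le_add_left (Finset.card_biUnion_le_card_mul _ _ _ fun y _ => ?_) _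
      exact Finset.card_image_le.trans ((card_nbrs G y).trans_le (hG.1 y))
    have hcard' : (cutCard G X : ℝ) ≤ D.card + (Y \ X).card * d := by exact_mod_cast hcard
    have hsd : ((Y \ X).card : ℝ) = Y.card - X.card := by
      have := Finset.card_sdiff_add_card_eq_card (hmono i)
      rw [eq_sub_iff_add_eq]
      exact_mod_cast this
    have hbX : b * β ≤ b * X.card := mul_le_mul_of_nonneg_left (hA.trans hAX) hb.le
    have hd' : (0 : ℝ) < d := by exact_mod_cast hd
    have hstep : b * β / (2 * d) ≤ (Y.card : ℝ) - X.card := by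
      rw [div_le_iff₀ (by positivity), ← hsd]
      nlinarith
    push_cast
    linarith

/-- Two large sets in an expander are joined by a short path avoiding a given small set of
edges. -/
lemma exists_short_connection {G : SimpleGraph V} {b : ℝ} {d : ℕ} (hG : IsExpander G b d)
    (hb : 0 < b) (hd : 0 < d) {A B : Finset V} {α : ℝ} (hV : 0 < Fintype.card V)
    (hA : α * Fintype.card V ≤ A.card) (hB : α * Fintype.card V ≤ B.card)
    {D : Finset (Sym2 V)} (hD : (D.card : ℝ) ≤ b * (α * Fintype.card V) / 2) {i : ℕ}
    (hi : d < i * (b * α)) :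
    ∃ Q ⊆ edgeFinset' G \ D, Q.card ≤ 2 * i ∧ ∃ u ∈ A, ∃ w ∈ B, w ∈ cluster Q u := by
  set G' := SimpleGraph.fromEdgeSet (↑(edgeFinset' G \ D) : Set (Sym2 V)) with hG'
  have hV' : (0 : ℝ) < Fintype.card V := by exact_mod_cast hV
  have hd' : (0 : ℝ) < d := by exact_mod_cast hd
  have hbig : ∀ X : Finset V, α * Fintype.card V ≤ X.card →
      (Fintype.card V : ℝ) < 2 * (ballAround G' X i).card := by
    intro X hX
    rcases ballAround_growth hG hb hd hX hD i with h | h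
    · exact h
    · have h2 : (Fintype.card V : ℝ) < 2 * (i * (b * (α * Fintype.card V) / (2 * d))) := by
        rw [show 2 * (i * (b * (α * (Fintype.card V : ℝ)) / (2 * d)))
          = Fintype.card V * (i * (b * α) / d) by field_simp]
        exact lt_mul_of_one_lt_right hV' ((one_lt_div hd').2 hi)
      linarith
  obtain ⟨v, hvA, hvB⟩ : ∃ v, v ∈ ballAround G' A i ∧ v ∈ ballAround G' B i := by
    by_contra! hcon
    have hdis : Disjoint (ballAround G' A i) (ballAround G' B i) := Finset.disjoint_left.2 hcon
    have h1 := Finset.card_le_univ (ballAround G' A i ∪ ballAround G' B i)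
    rw [Finset.card_union_of_disjoint hdis] at h1
    have h2 : ((ballAround G' A i).card : ℝ) + (ballAround G' B i).card ≤ Fintype.card V := by
      exact_mod_cast h1
    linarith [hbig A hA, hbig B hB]
  obtain ⟨u, hu, P, hP⟩ := mem_ballAround.1 hvA
  obtain ⟨w, hw, P', hP'⟩ := mem_ballAround.1 hvB
  set R := P.append P'.reverse with hR
  refine ⟨R.edges.toFinset, fun e he => ?_, ?_, u, hu, w, hw, ?_⟩
  · have := SimpleGraph.Walk.edges_subset_edgeSet _ (List.mem_toFinset.1 he)
    rw [hG', SimpleGraph.edgeSet_fromEdgeSet] at this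
    exact Finset.mem_coe.1 this.1
  · refine (List.toFinset_card_le _).trans ?_
    rw [SimpleGraph.Walk.length_edges, hR, SimpleGraph.Walk.length_append,
      SimpleGraph.Walk.length_reverse]
    omega
  · rw [mem_cluster]
    refine (R.transfer _ fun e he => ?_).reachable
    rw [SimpleGraph.edgeSet_fromEdgeSet]
    exact ⟨by simpa using he, G'.not_isDiag_of_mem_edgeSet
      (SimpleGraph.Walk.edges_subset_edgeSet _ he)⟩

/-! ### Sprinkling -/

lemma card_small_subsets_le (L : ℕ) {y : ℝ} (hy : 0 ≤ y) :
    ((Finset.univ.filter fun U : Finset V => U.card ≤ L).card : ℝ) ≤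
      Real.exp (Fintype.card V * Real.exp (-y) + y * L) := by
  have h1 : ∑ U : Finset V, Real.exp (-y) ^ U.card ≤
      Real.exp (Fintype.card V * Real.exp (-y)) := by
    have := Fintype.sum_pow_mul_eq_add_pow V (Real.exp (-y)) 1
    simp only [one_pow, mul_one] at this
    rw [this, Real.exp_nat_mul]
    exact pow_le_pow_left₀ (by positivity) (Real.add_one_le_exp _) _
  have h2 : ((Finset.univ.filter fun U : Finset V => U.card ≤ L).card : ℝ) * Real.exp (-(y * L))
      ≤ ∑ U : Finset V, Real.exp (-y) ^ U.card := by
    rw [← nsmul_eq_mul]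
    refine (Finset.card_nsmul_le_sum (Finset.univ.filter fun U : Finset V => U.card ≤ L)
      (fun U => Real.exp (-y) ^ U.card) _ fun U hU => ?_).trans
      (Finset.sum_le_sum_of_subset_of_nonneg (Finset.filter_subset _ _)
        fun U _ _ => by positivity)
    rw [← Real.exp_nat_mul, Real.exp_le_exp]
    have : (U.card : ℝ) ≤ L := by exact_mod_cast (Finset.mem_filter.1 hU).2
    nlinarith
  rw [Real.exp_add]
  calc _ = ((Finset.univ.filter fun U : Finset V => U.card ≤ L).card : ℝ)
        * Real.exp (-(y * L)) * Real.exp (y * L) := by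
        rw [mul_assoc, ← Real.exp_add]; simp
    _ ≤ _ := mul_le_mul_of_nonneg_right (h2.trans h1) (Real.exp_pos _).le

/-- `H` has a path with at least `L` edges. -/
def HasPath (H : SimpleGraph V) (L : ℕ) : Prop :=
  ∃ (u w : V) (P : H.Walk u w), P.IsPath ∧ L ≤ P.length

/-- If many vertices are in big clusters of `s`, then adding a few random edges creates a long
path with high probability. -/
lemma subsetExp_not_hasPath_le {G : SimpleGraph V} {b : ℝ} {d : ℕ} (hG : IsExpander G b d)
    (hreg : ∀ v, (nbrs G v).card = d) (hb : 0 < b) (hd : 0 < d) {p α : ℝ} (hp0 : 0 ≤ p)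
    (hp1 : p ≤ 1) (hV : 0 < Fintype.card V) {K L i m : ℕ} (hK : 0 < K)
    {s : Finset (Sym2 V)} (hs : s ⊆ edgeFinset' G)
    (hW : 2 * (α * Fintype.card V) + (L + 2 * ((d + 1) * L * K)) ≤ (bigVerts s K).card)
    (hm : m * (2 * i) + d * L ≤ b * (α * Fintype.card V) / 2) (hi : d < i * (b * α)) :
    subsetExp (edgeFinset' G) p
        (fun t => if ¬ HasPath (SimpleGraph.fromEdgeSet (↑(s ∪ t) : Set (Sym2 V))) L
          then 1 else 0) ≤
      (Finset.univ.filter fun U : Finset V => U.card ≤ L).card *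
        (2 ^ (Fintype.card V / K) * (1 - p ^ (2 * i)) ^ m) := by
  set 𝒰 := Finset.univ.filter fun U : Finset V => U.card ≤ L with h𝒰
  set 𝒞 := fun U => bigClusters (avoiding s U) K with h𝒞
  set A : Finset (Finset V) → Finset V := fun 𝒜 => 𝒜.biUnion id with hA
  set I := fun U => (𝒞 U).powerset.filter fun 𝒜 =>
    α * Fintype.card V ≤ ((A 𝒜).card : ℝ) ∧
      α * Fintype.card V ≤ ((A (𝒞 U \ 𝒜)).card : ℝ) with hI
  set g : Finset V → Finset (Finset V) → Finset (Sym2 V) → ℝ := fun U 𝒜 t =>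
    if ∀ Q ⊆ t, ¬ Connects (A 𝒜) (A (𝒞 U \ 𝒜)) U Q then 1 else 0 with hg
  have hq : 0 ≤ 1 - p ^ (2 * i) := by linarith [pow_le_one₀ hp0 hp1 (n := 2 * i)]
  have hg0 : ∀ U 𝒜 t, 0 ≤ g U 𝒜 t := by
    intro U 𝒜 t
    simp only [hg]
    split_ifs <;> norm_num
  have hpt : ∀ t, (if ¬ HasPath (SimpleGraph.fromEdgeSet (↑(s ∪ t) : Set (Sym2 V))) L
      then (1 : ℝ) else 0) ≤ ∑ U ∈ 𝒰, ∑ 𝒜 ∈ I U, g U 𝒜 t := by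
    intro t
    split_ifs with h
    · exact Finset.sum_nonneg fun U _ => Finset.sum_nonneg fun 𝒜 _ => hg0 U 𝒜 t
    · obtain ⟨U, hU, 𝒜, h𝒜, h1, h2, h3⟩ := exists_unconnected_split (K := K) hreg hs h
      have h1' : ((bigVerts s K).card : ℝ) ≤
          2 * (A 𝒜).card + (L + 2 * ((d + 1) * L * K)) := by exact_mod_cast h1
      have h2' : ((bigVerts s K).card : ℝ) ≤
          2 * (A (𝒞 U \ 𝒜)).card + (L + 2 * ((d + 1) * L * K)) := by exact_mod_cast h2
      have hgone : g U 𝒜 t = 1 := if_pos h3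
      calc (1 : ℝ) = g U 𝒜 t := hgone.symm
        _ ≤ ∑ 𝒜 ∈ I U, g U 𝒜 t := by
            refine Finset.single_le_sum (f := fun 𝒜 => g U 𝒜 t) (fun 𝒜 _ => hg0 U 𝒜 t) ?_
            exact Finset.mem_filter.2 ⟨Finset.mem_powerset.2 h𝒜, by linarith, by linarith⟩
        _ ≤ _ := Finset.single_le_sum (f := fun U => ∑ 𝒜 ∈ I U, g U 𝒜 t)
            (fun U _ => Finset.sum_nonneg fun 𝒜 _ => hg0 U 𝒜 t)
            (Finset.mem_filter.2 ⟨Finset.mem_univ _, hU⟩)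
  have hterm : ∀ U ∈ 𝒰, ∀ 𝒜 ∈ I U,
      subsetExp (edgeFinset' G) p (g U 𝒜) ≤ (1 - p ^ (2 * i)) ^ m := by
    intro U hU 𝒜 h𝒜
    obtain ⟨-, hA1, hA2⟩ := Finset.mem_filter.1 h𝒜
    refine subsetExp_no_good_le hp0 hp1 _ (2 * i) m _ fun D hD => ?_
    set D' := D ∪ U.biUnion fun u => (nbrs G u).image fun z => s(u, z) with hD'
    have hUc : U.card ≤ L := (Finset.mem_filter.1 hU).2
    have hD'c : D'.card ≤ m * (2 * i) + d * L := by
      refine (Finset.card_union_le _ _).trans (add_le_add hD ?_)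
      refine (Finset.card_biUnion_le_card_mul _ _ d fun u _ =>
        Finset.card_image_le.trans (hreg u).le).trans ?_
      rw [mul_comm]
      exact Nat.mul_le_mul_left _ hUc
    have hD'r : (D'.card : ℝ) ≤ b * (α * Fintype.card V) / 2 :=
      le_trans (by exact_mod_cast hD'c) hm
    obtain ⟨Q, hQ, hQc, u, hu, w, hw, huw⟩ :=
      exists_short_connection hG hb hd hV hA1 hA2 hD'r hi
    refine ⟨Q, hQ.trans (Finset.sdiff_subset_sdiff le_rfl Finset.subset_union_left), hQc,
      fun e he v hv hve => ?_, u, hu, w, hw, huw⟩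
    obtain ⟨heG, heD⟩ := Finset.mem_sdiff.1 (hQ he)
    obtain ⟨z, rfl⟩ := Sym2.mem_iff_exists.1 hve
    exact heD (Finset.mem_union_right _ (Finset.mem_biUnion.2 ⟨v, hv,
      Finset.mem_image_of_mem _ (mem_nbrs.2 (mem_edgeFinset'.1 heG))⟩))
  have hIc : ∀ U, ((I U).card : ℝ) ≤ 2 ^ (Fintype.card V / K) := by
    intro U
    have h1 : (I U).card ≤ 2 ^ (𝒞 U).card :=
      (Finset.card_filter_le _ _).trans (Finset.card_powerset _).le
    have h2 : (𝒞 U).card ≤ Fintype.card V / K :=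
      (Nat.le_div_iff_mul_le hK).2 (card_bigClusters_mul_le _ _)
    exact_mod_cast h1.trans (Nat.pow_le_pow_right (by norm_num) h2)
  calc _ ≤ subsetExp (edgeFinset' G) p (fun t => ∑ U ∈ 𝒰, ∑ 𝒜 ∈ I U, g U 𝒜 t) :=
        subsetExp_mono hp0 hp1 fun t _ => hpt t
    _ = ∑ U ∈ 𝒰, ∑ 𝒜 ∈ I U, subsetExp (edgeFinset' G) p (g U 𝒜) := by
        simp only [subsetExp_sum]
    _ ≤ ∑ U ∈ 𝒰, 2 ^ (Fintype.card V / K) * (1 - p ^ (2 * i)) ^ m := by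
        refine Finset.sum_le_sum fun U hU => (Finset.sum_le_card_nsmul _ _ _ (hterm U hU)).trans ?_
        rw [nsmul_eq_mul]
        exact mul_le_mul_of_nonneg_right (hIc U) (by positivity)
    _ = _ := by rw [Finset.sum_const, nsmul_eq_mul]

/-! ### Many vertices in big clusters -/

lemma card_edgeFinset'_le {G : SimpleGraph V} {d : ℕ} (hreg : ∀ v, (nbrs G v).card = d) :
    (edgeFinset' G).card ≤ Fintype.card V * d := by
  refine (Finset.card_le_card (t := Finset.univ.biUnion fun u =>
    (nbrs G u).image fun z => s(u, z)) fun e he => ?_).trans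
    (Finset.card_biUnion_le_card_mul _ _ d fun u _ => Finset.card_image_le.trans (hreg u).le)
  induction e using Sym2.ind with
  | _ x y =>
  exact Finset.mem_biUnion.2 ⟨x, Finset.mem_univ _,
    Finset.mem_image_of_mem _ (mem_nbrs.2 (mem_edgeFinset'.1 he))⟩

lemma le_subsetExp_card_bigVerts {G : SimpleGraph V} {d K : ℕ} {p x : ℝ} (hp0 : 0 ≤ p)
    (hp1 : p ≤ 1) (hx0 : 0 ≤ x) (hx1 : x ≤ 1) (hd : 1 ≤ d)
    (hx : p * x ^ (d - 1) + (1 - p) ≤ x)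
    (hreg : ∀ v, (nbrs G v).card = d)
    (hgirth : ∀ a (w : G.Walk a a), w.IsCycle → K < w.length) :
    (1 - x) * Fintype.card V ≤
      subsetExp (edgeFinset' G) p (fun s => ((bigVerts s K).card : ℝ)) := by
  have heq : (fun s : Finset (Sym2 V) => ((bigVerts s K).card : ℝ)) =
      fun s => ∑ v : V, (1 + (-1) * if (cluster s v).card < K then 1 else 0) := by
    funext s
    rw [bigVerts, Finset.card_filter]
    push_cast
    refine Finset.sum_congr rfl fun v _ => ?_
    by_cases h : K ≤ (cluster s v).card
    · simp [h, not_lt.2 h]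
    · simp [h, not_le.1 h]
  rw [heq, subsetExp_sum]
  calc (1 - x) * Fintype.card V = ∑ _v : V, (1 - x) := by
        rw [Finset.sum_const, nsmul_eq_mul, Finset.card_univ, mul_comm]
    _ ≤ _ := Finset.sum_le_sum fun v _ => by
      rw [subsetExp_add, subsetExp_const, subsetExp_const_mul]
      linarith [subsetExp_small_cluster_le hp0 hp1 hx0 hx1 hd hx hreg hgirth v]

lemma subsetExp_few_bigVerts_le {G : SimpleGraph V} {d K : ℕ} {p θ : ℝ} (hp0 : 0 ≤ p)
    (hp1 : p ≤ 1) (hθ0 : 0 ≤ θ) (hθ1 : θ ≤ 1) (hd : 1 ≤ d) (hK : 0 < K)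
    (hθ : p * (1 - θ) ^ (d - 1) + (1 - p) ≤ 1 - θ)
    (hreg : ∀ v, (nbrs G v).card = d)
    (hgirth : ∀ a (w : G.Walk a a), w.IsCycle → K < w.length) :
    subsetExp (edgeFinset' G) p
        (fun s => if ((bigVerts s K).card : ℝ) < θ * Fintype.card V / 2 then 1 else 0) ≤
      Real.exp (-(θ ^ 2 / (64 * d * K ^ 2)) * Fintype.card V) := by
  have hd' : (1 : ℝ) ≤ d := by exact_mod_cast hd
  have hK' : (1 : ℝ) ≤ K := by exact_mod_cast hK
  have hmean := le_subsetExp_card_bigVerts hp0 hp1 (by linarith) (by linarith) hd hθ hreg hgirth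
  rw [sub_sub_cancel] at hmean
  have hτ : θ / (16 * d * K ^ 2) * (2 * K) ≤ 1 := by
    rw [div_mul_eq_mul_div, div_le_one (by positivity)]
    have : (K : ℝ) ≤ d * K ^ 2 := by nlinarith
    nlinarith
  refine (subsetExp_lower_tail hp0 hp1 (by positivity) hτ _ _
    (fun e _ s _ => abs_card_bigVerts_insert_sub_le e s K) hmean).trans ?_
  rw [Real.exp_le_exp]
  have hE : ((edgeFinset' G).card : ℝ) ≤ Fintype.card V * d := by
    exact_mod_cast card_edgeFinset'_le hreg
  calc _ ≤ θ / (16 * d * K ^ 2) * (θ * Fintype.card V / 2 - θ * Fintype.card V)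
        + Fintype.card V * d * (θ / (16 * d * K ^ 2) * (2 * K)) ^ 2 := by gcongr
    _ = _ := by field_simp; ring

/-- The survival equation of the supercritical branching process has a solution below one. -/
lemma survival_inequality {m : ℕ} (hm : 0 < m) {p θ : ℝ} (hp : 1 / (m : ℝ) ≤ p) (hp1 : p ≤ 1)
    (hθ : θ = p - 1 / m) : p * (1 - θ) ^ m + (1 - p) ≤ 1 - θ := by
  have hm' : (0 : ℝ) < m := by exact_mod_cast hm
  have hinv : 0 < 1 / (m : ℝ) := by positivity
  have hθ0 : 0 ≤ θ := by linarith
  have hθ1 : θ ≤ 1 := by linarith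
  have h1 : 1 + m * θ ≤ (1 + θ) ^ m := one_add_mul_le_pow (by linarith) m
  have h2 : 1 + m * θ = m * p := by rw [hθ]; field_simp; ring
  have h3 : (1 - θ) ^ m * (1 + θ) ^ m ≤ 1 := by
    rw [← mul_pow]
    exact pow_le_one₀ (by nlinarith) (by nlinarith)
  have h4 : 0 ≤ (1 - θ) ^ m := pow_nonneg (by linarith) _
  have h5 : (m : ℝ) * (p * (1 - θ) ^ m) ≤ 1 := by nlinarith
  have h6 : p * (1 - θ) ^ m ≤ 1 / m := by
    rw [le_div_iff₀ hm']
    linarith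
  linarith

lemma percProb_eq_one_sub (G : SimpleGraph V) (p : ℝ) (P : SimpleGraph V → Prop) :
    percProb G p P = 1 - subsetExp (edgeFinset' G) p
      (fun s => if ¬ P (SimpleGraph.fromEdgeSet (↑s : Set (Sym2 V))) then 1 else 0) := by
  have h : percProb G p P = subsetExp (edgeFinset' G) p
      (fun s => 1 + (-1) * if ¬ P (SimpleGraph.fromEdgeSet (↑s : Set (Sym2 V))) then 1 else 0) := by
    unfold percProb subsetExp
    refine Finset.sum_congr rfl fun s _ => ?_
    by_cases h : P (SimpleGraph.fromEdgeSet (↑s : Set (Sym2 V))) <;> simp [h]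
  rw [h, subsetExp_add, subsetExp_const, subsetExp_const_mul]
  ring

lemma girth_le_card {G : SimpleGraph V} (h : G.girth ≠ 0) : G.girth ≤ Fintype.card V := by
  obtain ⟨a, w, hw, hlen⟩ := SimpleGraph.exists_girth_eq_length.2
    (fun hac => h (SimpleGraph.girth_eq_zero.2 hac))
  have := hw.support_nodup.length_le_card
  rw [hlen]
  simpa using this

lemma avoided_vertices_le {d K L n θ δ W : ℝ} (hd : 0 ≤ d) (hK : 1 ≤ K) (hn : 0 ≤ n)
    (hδ0 : 0 ≤ δ) (hL : L ≤ δ * n) (hδ : δ * (16 * (d + 1) * K) ≤ θ)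
    (hW : θ * n / 2 ≤ W) : 2 * (θ / 8 * n) + (L + 2 * ((d + 1) * L * K)) ≤ W := by
  have h1 : 1 ≤ (d + 1) * K := one_le_mul_of_one_le_of_one_le (by linarith) hK
  have h2 : L * (1 + 2 * ((d + 1) * K)) ≤ δ * n * (3 * ((d + 1) * K)) :=
    mul_le_mul hL (by linarith) (by positivity) (by positivity)
  have h3 : δ * (16 * (d + 1) * K) * n ≤ θ * n := mul_le_mul_of_nonneg_right hδ hn
  have h4 : 0 ≤ δ * n * ((d + 1) * K) := by positivity
  linarith

lemma removed_edges_le {a d L i m n δ : ℝ} (hd : 0 ≤ d) (hn : 0 ≤ n) (hi : 0 < i)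
    (hL : L ≤ δ * n) (hδ : δ * (4 * d) ≤ a) (hm : m ≤ a * n / (8 * i)) :
    m * (2 * i) + d * L ≤ a * n / 2 := by
  have h1 : m * (2 * i) ≤ a * n / 4 := by
    calc m * (2 * i) ≤ a * n / (8 * i) * (2 * i) :=
          mul_le_mul_of_nonneg_right hm (by positivity)
      _ = _ := by field_simp; ring
  have h2 : d * L ≤ d * (δ * n) := mul_le_mul_of_nonneg_left hL hd
  have h3 : δ * (4 * d) * n ≤ a * n := mul_le_mul_of_nonneg_right hδ hn
  linarith

lemma card_small_subsets_mul_le {K L m : ℕ} {c q y δ : ℝ} (hK0 : 0 < K) (hK : 4 < K * c)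
    (hq1 : q ≤ 1) (hy0 : 0 ≤ y) (hy : Real.exp (-y) ≤ c / 8) (hδ : δ * (8 * y) ≤ c)
    (hL : L ≤ δ * Fintype.card V) (hm : c * Fintype.card V ≤ q * m + 1) :
    ((Finset.univ.filter fun U : Finset V => U.card ≤ L).card : ℝ) *
      (2 ^ (Fintype.card V / K) * (1 - q) ^ m) ≤
      Real.exp (1 - c / 2 * Fintype.card V) := by
  set n : ℝ := (Fintype.card V : ℝ) with hn
  have hn0 : 0 ≤ n := Nat.cast_nonneg _
  have h1 := card_small_subsets_le (V := V) L hy0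
  have h2 : (2 : ℝ) ^ (Fintype.card V / K) ≤ Real.exp (c / 4 * n) := by
    calc (2 : ℝ) ^ (Fintype.card V / K) ≤ Real.exp 1 ^ (Fintype.card V / K) :=
          pow_le_pow_left₀ (by norm_num) (by linarith [Real.add_one_le_exp 1]) _
      _ = Real.exp ((Fintype.card V / K : ℕ) : ℝ) := by rw [← Real.exp_nat_mul, mul_one]
      _ ≤ Real.exp (c / 4 * n) := by
          rw [Real.exp_le_exp]
          refine Nat.cast_div_le.trans ?_
          rw [div_le_iff₀ (by exact_mod_cast hK0)]
          have := mul_le_mul_of_nonneg_right hK.le hn0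
          linarith
  have h3 : (1 - q) ^ m ≤ Real.exp (1 - c * n) := by
    calc (1 - q) ^ m ≤ Real.exp (-q) ^ m :=
          pow_le_pow_left₀ (by linarith) (by linarith [Real.add_one_le_exp (-q)]) _
      _ = Real.exp (m * -q) := by rw [← Real.exp_nat_mul]
      _ ≤ Real.exp (1 - c * n) := by
          rw [Real.exp_le_exp]
          linarith
  have h4 : n * Real.exp (-y) ≤ n * (c / 8) := mul_le_mul_of_nonneg_left hy hn0
  have h5 : y * L ≤ y * (δ * n) := mul_le_mul_of_nonneg_left hL hy0
  have h6 : δ * (8 * y) * n ≤ c * n := mul_le_mul_of_nonneg_right hδ hn0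
  have h7 : n * Real.exp (-y) + y * L ≤ c / 4 * n := by linarith
  have h8 : 0 ≤ (1 - q) ^ m := pow_nonneg (by linarith) m
  calc _ ≤ Real.exp (c / 4 * n) * (Real.exp (c / 4 * n) * Real.exp (1 - c * n)) :=
        mul_le_mul (h1.trans (Real.exp_le_exp.2 h7))
          (mul_le_mul h2 h3 h8 (Real.exp_pos _).le)
          (mul_nonneg (by positivity) h8) (Real.exp_pos _).le
    _ = Real.exp (1 - c / 2 * n) := by
        rw [← Real.exp_add, ← Real.exp_add]
        ring_nf

lemma exp_add_exp_one_sub_le {x y z : ℝ} (hyx : y ≤ x) (hyz : y ≤ z) (hy : 4 ≤ y) :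
    Real.exp (-x) + Real.exp (1 - z) ≤ Real.exp (-(y / 2)) := by
  have h1 : Real.exp (-x) ≤ Real.exp (-y) := Real.exp_le_exp.2 (by linarith)
  have h2 : Real.exp (1 - z) ≤ Real.exp 1 * Real.exp (-y) := by
    rw [← Real.exp_add, Real.exp_le_exp]
    linarith
  have h3 : Real.exp 2 = Real.exp 1 * Real.exp 1 := by rw [← Real.exp_add]; norm_num
  have h4 : 1 + Real.exp 1 ≤ Real.exp 2 := by nlinarith [Real.add_one_le_exp 1]
  calc _ ≤ (1 + Real.exp 1) * Real.exp (-y) := by linarith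
    _ ≤ Real.exp 2 * Real.exp (-y) := mul_le_mul_of_nonneg_right h4 (Real.exp_pos _).le
    _ ≤ _ := by
        rw [← Real.exp_add, Real.exp_le_exp]
        linarith

theorem linear_path_in_percolated_expander (d : ℕ) (hd : 3 ≤ d) (p : ℝ)
    (hp : 1 / ((d : ℝ) - 1) < p) (hp1 : p < 1) (b : ℝ) (hb : 0 < b) :
    ∃ δ > (0:ℝ), ∃ c > (0:ℝ), ∃ R : ℕ, 0 < R ∧
      ∀ (V : Type) [Fintype V] [DecidableEq V] (G : SimpleGraph V),
        IsRegularExpander G b d → (R : ℕ∞) < G.girth →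
        1 - Real.exp (-c * Fintype.card V) ≤
          percProb G p (fun H =>
            ∃ (u w : V) (P : H.Walk u w), P.IsPath ∧
              δ * Fintype.card V ≤ (P.length : ℝ)) := by
  have hdR : (3 : ℝ) ≤ d := by exact_mod_cast hd
  have hd0 : (0 : ℝ) < d := by linarith
  have hinv : 0 < 1 / ((d : ℝ) - 1) := one_div_pos.2 (by linarith)
  -- The two percolation parameters.
  obtain ⟨p₁, hp₁l, hp₁u⟩ := exists_between hp
  set p₂ := (p - p₁) / (1 - p₁) with hp₂
  have hp₂0 : 0 < p₂ := div_pos (by linarith) (by linarith)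
  have hp₂1 : p₂ ≤ 1 := (div_le_one (by linarith)).2 (by linarith)
  have hspr : 1 - p = (1 - p₁) * (1 - p₂) := by
    have : 1 - p₁ ≠ 0 := by linarith
    rw [hp₂]
    field_simp
    ring
  have hp₁0 : 0 ≤ p₁ := by linarith
  have hp₁1 : p₁ ≤ 1 := by linarith
  -- The density of big clusters.
  set θ := p₁ - 1 / ((d : ℝ) - 1) with hθ
  have hθ0 : 0 < θ := by linarith
  have hθ1 : θ ≤ 1 := by linarith
  have hcast : ((d - 1 : ℕ) : ℝ) = (d : ℝ) - 1 := by
    rw [Nat.cast_sub (by omega), Nat.cast_one]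
  have hsurv : p₁ * (1 - θ) ^ (d - 1) + (1 - p₁) ≤ 1 - θ :=
    survival_inequality (by omega) (by rw [hcast]; exact hp₁l.le) hp₁1 (by rw [hcast])
  set α := θ / 8 with hα
  have hα0 : 0 < α := by positivity
  have hbα : 0 < b * α := by positivity
  -- The length of the connecting paths.
  obtain ⟨i, hi⟩ := exists_nat_gt (d / (b * α))
  rw [div_lt_iff₀ hbα] at hi
  have hi0 : (0 : ℝ) < i := by
    by_contra! h
    nlinarith
  set q := p₂ ^ (2 * i) with hq
  have hq0 : 0 < q := by positivity
  have hq1 : q ≤ 1 := pow_le_one₀ hp₂0.le hp₂1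
  set c₂ := q * (b * α / (8 * i)) with hc₂
  have hc₂0 : 0 < c₂ := by positivity
  -- The size of the big clusters.
  obtain ⟨K, hK⟩ := exists_nat_gt (4 / c₂)
  have hK0 : (0 : ℝ) < K := lt_trans (by positivity) hK
  have hKpos : 0 < K := by exact_mod_cast hK0
  have hK1 : (1 : ℝ) ≤ K := by exact_mod_cast hKpos
  rw [div_lt_iff₀ hc₂0] at hK
  -- The size of the separators.
  obtain ⟨y, hy0, hy⟩ : ∃ y : ℝ, 0 < y ∧ Real.exp (-y) ≤ c₂ / 8 := by
    refine ⟨max 1 (-Real.log (c₂ / 8)), by positivity, ?_⟩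
    rw [← Real.le_log_iff_exp_le (by positivity)]
    linarith [le_max_right 1 (-Real.log (c₂ / 8))]
  obtain ⟨δ, hδ0, hδ⟩ := exists_between
    (show 0 < min (θ / (16 * (d + 1) * K)) (min (b * α / (4 * d)) (c₂ / (8 * y))) by positivity)
  rw [lt_min_iff, lt_min_iff, lt_div_iff₀ (by positivity), lt_div_iff₀ (by positivity),
    lt_div_iff₀ (by positivity)] at hδ
  obtain ⟨hδ1, hδ2, hδ3⟩ := hδ
  set c₁ := θ ^ 2 / (64 * d * K ^ 2) with hc₁
  have hc₁0 : 0 < c₁ := by positivity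
  set c := min c₁ (c₂ / 2) with hc
  have hc0 : 0 < c := by positivity
  obtain ⟨R, hR⟩ := exists_nat_gt (max (K : ℝ) (max (2 / δ) (4 / c)))
  rw [max_lt_iff, max_lt_iff] at hR
  obtain ⟨hRK, hRδ, hRc⟩ := hR
  refine ⟨δ / 2, by positivity, c / 2, by positivity, R, by exact_mod_cast hK0.trans hRK, ?_⟩
  intro V _ _ G hG hgirth
  have hgR : R < G.girth := by exact_mod_cast hgirth
  have hreg : ∀ v, (nbrs G v).card = d := fun v => (card_nbrs G v).trans (hG.2 v)
  have hcyc : ∀ a (w : G.Walk a a), w.IsCycle → K < w.length := fun a w hw =>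
    ((show K < R by exact_mod_cast hRK).trans hgR).trans_le (SimpleGraph.girth_le_length hw)
  have hnR : R < Fintype.card V := hgR.trans_le (girth_le_card (by omega))
  set n : ℝ := (Fintype.card V : ℝ) with hn
  have hnR' : (R : ℝ) < n := Nat.cast_lt.2 hnR
  have hn0 : 0 < n := hK0.trans (hRK.trans hnR')
  have hδn : 2 ≤ δ * n := by
    have := hRδ.trans hnR'
    rw [div_lt_iff₀ hδ0] at this
    linarith
  have hcn : 4 ≤ c * n := by
    have := hRc.trans hnR'
    rw [div_lt_iff₀ hc0] at this
    linarith
  set L := ⌊δ * n⌋₊ with hL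
  have hLu : (L : ℝ) ≤ δ * n := Nat.floor_le (by positivity)
  have hLl : δ / 2 * n ≤ L := by
    have := Nat.lt_floor_add_one (δ * n)
    linarith
  set m := ⌊b * α * n / (8 * i)⌋₊ with hm
  have hmu : (m : ℝ) ≤ b * α * n / (8 * i) := Nat.floor_le (by positivity)
  have hml : b * α * n / (8 * i) - 1 ≤ m := by
    have := Nat.lt_floor_add_one (b * α * n / (8 * i))
    linarith
  -- Few vertices in big clusters is unlikely.
  have hfew := subsetExp_few_bigVerts_le hp₁0 hp₁1 hθ0.le hθ1 (by omega) hKpos hsurv hreg hcyc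
  -- Many vertices in big clusters and no long path is unlikely.
  set B := ((Finset.univ.filter fun U : Finset V => U.card ≤ L).card : ℝ) *
        (2 ^ (Fintype.card V / K) * (1 - p₂ ^ (2 * i)) ^ m) with hB
  have hmany : ∀ s ⊆ edgeFinset' G, ¬ ((bigVerts s K).card : ℝ) < θ * n / 2 →
      subsetExp (edgeFinset' G) p₂
        (fun t => if ¬ HasPath (SimpleGraph.fromEdgeSet (↑(s ∪ t) : Set (Sym2 V))) L
          then 1 else 0) ≤ B := by
    intro s hs hbig
    refine subsetExp_not_hasPath_le (α := α) hG.1 hreg hb (by omega) hp₂0.le hp₂1 (by omega) hKpos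
      hs ?_ ?_ hi
    · exact avoided_vertices_le hd0.le hK1 hn0.le hδ0.le hLu hδ1.le
        (not_lt.1 hbig)
    · rw [← hn, ← mul_assoc b]
      exact removed_edges_le hd0.le hn0.le hi0 hLu hδ2.le hmu
  have hB0 : 0 ≤ B :=
    mul_nonneg (Nat.cast_nonneg _) (mul_nonneg (by positivity) (pow_nonneg (sub_nonneg.2 hq1) _))
  have hBle : B ≤ Real.exp (1 - c₂ / 2 * n) := by
    refine card_small_subsets_mul_le hKpos hK hq1 hy0.le hy hδ3.le hLu ?_
    have h1 : c₂ * n = q * (b * α * n / (8 * i)) := by rw [hc₂]; ring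
    have h2 := mul_le_mul_of_nonneg_left hml hq0.le
    rw [← hn, h1]
    linarith
  -- Combining the two rounds of exposure.
  rw [percProb_eq_one_sub]
  refine sub_le_sub_left ?_ 1
  calc _ ≤ subsetExp (edgeFinset' G) p (fun s =>
        if ¬ HasPath (SimpleGraph.fromEdgeSet (↑s : Set (Sym2 V))) L then 1 else 0) := by
        refine subsetExp_mono (by linarith) hp1.le fun s _ => ?_
        by_cases h : HasPath (SimpleGraph.fromEdgeSet (↑s : Set (Sym2 V))) L
        · obtain ⟨u, w, P, hP, hlen⟩ := h
          rw [if_neg (not_not.2 ⟨u, w, P, hP, hLl.trans (by exact_mod_cast hlen)⟩)]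
          split_ifs <;> norm_num
        · rw [if_pos h]
          split_ifs <;> norm_num
    _ ≤ subsetExp (edgeFinset' G) p₁ (fun s =>
        (if ((bigVerts s K).card : ℝ) < θ * n / 2 then 1 else 0) + B) := by
        rw [subsetExp_sprinkle _ hspr]
        refine subsetExp_mono hp₁0 hp₁1 fun s hs => ?_
        split_ifs with hbig
        · have : subsetExp (edgeFinset' G) p₂ (fun t =>
              if ¬ HasPath (SimpleGraph.fromEdgeSet (↑(s ∪ t) : Set (Sym2 V))) L
                then 1 else 0) ≤ 1 :=
            (subsetExp_mono hp₂0.le hp₂1 (g := fun _ => 1) fun t _ => by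
              split_ifs <;> norm_num).trans_eq (subsetExp_const _ _)
          linarith
        · rw [zero_add]
          exact hmany s hs hbig
    _ ≤ Real.exp (-c₁ * n) + Real.exp (1 - c₂ / 2 * n) := by
        rw [subsetExp_add, subsetExp_const]
        exact add_le_add hfew hBle
    _ ≤ Real.exp (-(c / 2) * n) := by
        have h1 : c * n ≤ c₁ * n := mul_le_mul_of_nonneg_right (min_le_left _ _) hn0.le
        have h2 : c * n ≤ c₂ / 2 * n := mul_le_mul_of_nonneg_right (min_le_right _ _) hn0.le
        refine le_of_eq_of_le ?_ ((exp_add_exp_one_sub_le h1 h2 hcn).trans_eq ?_)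
        · rw [neg_mul]
        · congr 1
          ring

end Percolation

end
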